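/- arXiv:math/0702178 — 5 statements merged into one kernel-verified Lean document; each statement's English description precedes it below -/
import Mathlib

section
/- Let X be a type, γ a finite subset of X, and f, g : X → ℝ. Then ∑_{η ⊆ γ} ( ∑_{x ∈ η} e^{f(x)} g(x) · ∏_{y ∈ η, y ≠ x} (e^{f(y)} − 1) ) = exp( ∑_{x ∈ γ} f(x) ) · ( ∑_{x ∈ γ} g(x) ), where the outer sum runs over all subsets η of γ. -/
/-!
Put `u = exp ∘ f`. Exchanging the two sums, write a subset `η` of `γ` with a marked point `x` as
the pair of `x` and `ξ = η \ {x}`, an arbitrary subset of `γ \ {x}`. For fixed `x`, summing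
`∏ y ∈ ξ, (u y - 1)` over `ξ` gives `∏ y ∈ γ \ {x}, u y`, and the factor `u x` completes this to
the product over all of `γ`.
-/

section

open Finset

variable {X : Type*} [DecidableEq X]

theorem sum_powerset_sum_erase {M : Type*} [AddCommMonoid M] (γ : Finset X)
    (F : X → Finset X → M) :
    ∑ η ∈ γ.powerset, ∑ x ∈ η, F x (η.erase x) =
      ∑ x ∈ γ, ∑ ξ ∈ (γ.erase x).powerset, F x ξ := by
  rw [sum_sigma', sum_sigma']
  refine sum_bij' (fun p _ => ⟨p.2, p.1.erase p.2⟩) (fun q _ => ⟨insert q.1 q.2, q.1⟩)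
    ?_ ?_ ?_ ?_ fun _ _ => rfl
  all_goals simp only [Sigma.forall, mem_sigma, mem_powerset, subset_erase, and_imp]
  · exact fun η x hη hx => ⟨hη hx, (erase_subset x η).trans hη, notMem_erase x η⟩
  · exact fun x ξ hx hξ _ => ⟨insert_subset hx hξ, mem_insert_self x ξ⟩
  · exact fun η x _ hx => by rw [insert_erase hx]
  · exact fun x ξ _ _ hxξ => by rw [erase_insert hxξ]

theorem sum_powerset_sum_mul_prod_erase {R : Type*} [CommSemiring R] (γ : Finset X)
    (v w : X → R) :
    ∑ η ∈ γ.powerset, ∑ x ∈ η, w x * ∏ y ∈ η.erase x, v y =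
      ∑ x ∈ γ, w x * ∏ y ∈ γ.erase x, (v y + 1) := by
  simp only [sum_powerset_sum_erase γ fun x ξ => w x * ∏ y ∈ ξ, v y, ← mul_sum, ← prod_add_one]

theorem K_transform_exp_linear_general {R : Type*} [CommRing R] (γ : Finset X) (u g : X → R) :
    ∑ η ∈ γ.powerset, ∑ x ∈ η, u x * g x * ∏ y ∈ η.erase x, (u y - 1) =
      (∏ x ∈ γ, u x) * ∑ x ∈ γ, g x :=
  calc ∑ η ∈ γ.powerset, ∑ x ∈ η, u x * g x * ∏ y ∈ η.erase x, (u y - 1)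
    _ = ∑ x ∈ γ, u x * g x * ∏ y ∈ γ.erase x, u y := by
      simp only [sum_powerset_sum_mul_prod_erase, sub_add_cancel]
    _ = ∑ x ∈ γ, (∏ y ∈ γ, u y) * g x :=
      sum_congr rfl fun x hx => by rw [mul_right_comm, mul_prod_erase γ u hx]
    _ = (∏ x ∈ γ, u x) * ∑ x ∈ γ, g x := (mul_sum ..).symm

end

/-- K-transform identity (Lemma 2.2 of the paper, on finite configurations):
`∑_{η ⊆ γ} ∑_{x ∈ η} e^{f(x)} g(x) ∏_{y ∈ η, y ≠ x} (e^{f(y)} - 1)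
  = e^{∑_{x ∈ γ} f(x)} · ∑_{x ∈ γ} g(x)`. -/
theorem K_transform_exp_linear {X : Type*} [DecidableEq X]
    (γ : Finset X) (f g : X → ℝ) :
    ∑ η ∈ γ.powerset,
        ∑ x ∈ η, Real.exp (f x) * g x * ∏ y ∈ η.erase x, (Real.exp (f y) - 1)
      = Real.exp (∑ x ∈ γ, f x) * ∑ x ∈ γ, g x := by
  rw [Real.exp_sum]
  exact K_transform_exp_linear_general γ (fun x => Real.exp (f x)) g
end

section
/- Let X be a type, γ a finite subset of X, and f, g₁, g₂ : X → ℝ. Then ∑_{η ⊆ γ} ( ∑_{x₁ ∈ η} ∑_{x₂ ∈ η, x₂ ≠ x₁} e^{f(x₁)} g₁(x₁) · e^{f(x₂)} g₂(x₂) · ∏_{y ∈ η, y ∉ {x₁,x₂}} (e^{f(y)} − 1) ) = exp( ∑_{x ∈ γ} f(x) ) · ∑_{x₁ ∈ γ} ∑_{x₂ ∈ γ, x₂ ≠ x₁} g₁(x₁) g₂(x₂), where the outer sum runs over all subsets η of γ. -/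
/-!
Removing a marked point `x` from `η ⊆ γ` leaves an arbitrary subset of `γ \ {x}`, so the K-transform
of a sum over marked points is a sum, over `x ∈ γ`, of K-transforms on `γ \ {x}`. With `a = e^f`,
each marked point contributes its own factor `a x`, and `K (∏ (a - 1)) = ∏ a` supplies the remaining
factors of `∏ y ∈ γ, a y`.
-/

section KTransform

variable {X M R : Type*}

/-- The K-transform `(KG)(γ) = ∑_{η ⊆ γ} G(η)` of a function on finite configurations, which are
encoded as finsets. -/
def kTransform [AddCommMonoid M] (G : Finset X → M) (γ : Finset X) : M :=
  ∑ η ∈ γ.powerset, G η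

theorem kTransform_const_mul [NonUnitalNonAssocSemiring R] (c : R) (G : Finset X → R)
    (γ : Finset X) : kTransform (fun η => c * G η) γ = c * kTransform G γ :=
  (Finset.mul_sum ..).symm

theorem kTransform_prod_sub_one [CommRing R] (a : X → R) (γ : Finset X) :
    kTransform (fun η => ∏ y ∈ η, (a y - 1)) γ = ∏ y ∈ γ, a y := by
  simp only [kTransform, ← Finset.prod_add_one, sub_add_cancel]

variable [DecidableEq X]

theorem kTransform_sum_erase [AddCommMonoid M] (F : X → Finset X → M) (γ : Finset X) :
    kTransform (fun η => ∑ x ∈ η, F x (η.erase x)) γ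
      = ∑ x ∈ γ, kTransform (F x) (γ.erase x) := by
  have marked_point_first :
      ∑ η ∈ γ.powerset, ∑ x ∈ η, F x (η.erase x)
        = ∑ x ∈ γ, ∑ η ∈ γ.powerset with x ∈ η, F x (η.erase x) :=
    Finset.sum_comm' (by grind)
  refine marked_point_first.trans (Finset.sum_congr rfl fun x hx => ?_)
  exact Finset.sum_nbij' (·.erase x) (insert x) (by grind) (by grind) (by grind) (by grind)
    fun _ _ => rfl

theorem kTransform_sum_mul_prod_sub_one [CommRing R] (a h : X → R) (γ : Finset X) :
    kTransform (fun η => ∑ x ∈ η, a x * h x * ∏ y ∈ η.erase x, (a y - 1)) γ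
      = (∏ y ∈ γ, a y) * ∑ x ∈ γ, h x := by
  rw [kTransform_sum_erase fun x ζ => a x * h x * ∏ y ∈ ζ, (a y - 1), Finset.mul_sum]
  refine Finset.sum_congr rfl fun x hx => ?_
  rw [kTransform_const_mul, kTransform_prod_sub_one, mul_right_comm, Finset.mul_prod_erase γ a hx]

theorem K_transform_exp_bilinear_general [CommRing R] (a : X → R) (h : X → X → R)
    (γ : Finset X) :
    kTransform (fun η => ∑ x₁ ∈ η, ∑ x₂ ∈ η.erase x₁,
        a x₁ * a x₂ * h x₁ x₂ * ∏ y ∈ (η.erase x₁).erase x₂, (a y - 1)) γ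
      = (∏ y ∈ γ, a y) * ∑ x₁ ∈ γ, ∑ x₂ ∈ γ.erase x₁, h x₁ x₂ := by
  calc
    _ = kTransform (fun η => ∑ x₁ ∈ η, a x₁ * ∑ x₂ ∈ η.erase x₁,
          a x₂ * h x₁ x₂ * ∏ y ∈ (η.erase x₁).erase x₂, (a y - 1)) γ := by
      simp only [Finset.mul_sum, mul_assoc]
    _ = ∑ x₁ ∈ γ, a x₁ * kTransform (fun ζ => ∑ x₂ ∈ ζ,
          a x₂ * h x₁ x₂ * ∏ y ∈ ζ.erase x₂, (a y - 1)) (γ.erase x₁) := by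
      simp only [← kTransform_const_mul]
      exact kTransform_sum_erase (fun x₁ ζ => a x₁ * ∑ x₂ ∈ ζ,
        a x₂ * h x₁ x₂ * ∏ y ∈ ζ.erase x₂, (a y - 1)) γ
    _ = ∑ x₁ ∈ γ, (∏ y ∈ γ, a y) * ∑ x₂ ∈ γ.erase x₁, h x₁ x₂ :=
      Finset.sum_congr rfl fun x₁ hx₁ => by
        rw [kTransform_sum_mul_prod_sub_one, ← mul_assoc, Finset.mul_prod_erase γ a hx₁]
    _ = (∏ y ∈ γ, a y) * ∑ x₁ ∈ γ, ∑ x₂ ∈ γ.erase x₁, h x₁ x₂ := (Finset.mul_sum ..).symm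

end KTransform

/-- K-transform identity (Lemma 2.2 of the paper, on finite configurations):
`∑_{η ⊆ γ} ∑_{x₁ ∈ η} ∑_{x₂ ∈ η, x₂ ≠ x₁} e^{f(x₁)} g₁(x₁) e^{f(x₂)} g₂(x₂)
    ∏_{y ∈ η, y ∉ {x₁,x₂}} (e^{f(y)} - 1)
  = e^{∑_{x ∈ γ} f(x)} · ∑_{x₁ ∈ γ} ∑_{x₂ ∈ γ, x₂ ≠ x₁} g₁(x₁) g₂(x₂)`. -/
theorem K_transform_exp_bilinear {X : Type*} [DecidableEq X]
    (γ : Finset X) (f g₁ g₂ : X → ℝ) :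
    ∑ η ∈ γ.powerset,
        ∑ x₁ ∈ η, ∑ x₂ ∈ η.erase x₁,
          Real.exp (f x₁) * g₁ x₁ * (Real.exp (f x₂) * g₂ x₂) *
            ∏ y ∈ (η.erase x₁).erase x₂, (Real.exp (f y) - 1)
      = Real.exp (∑ x ∈ γ, f x) * ∑ x₁ ∈ γ, ∑ x₂ ∈ γ.erase x₁, g₁ x₁ * g₂ x₂ := by
  simpa only [kTransform, Real.exp_sum, mul_mul_mul_comm (Real.exp _) (g₁ _)] using
    K_transform_exp_bilinear_general (fun x => Real.exp (f x)) (fun x₁ x₂ => g₁ x₁ * g₂ x₂) γ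
end

section
/- Let X be a type and let G₁, G₂ be real-valued functions on finite subsets of X. Define the ⋆-convolution by (G₁ ⋆ G₂)(ξ) := ∑ G₁(η₁ ∪ η₂) · G₂(η₂ ∪ η₃), the sum over all ordered triples (η₁, η₂, η₃) of pairwise disjoint subsets with η₁ ∪ η₂ ∪ η₃ = ξ. Then for every finite subset γ ⊆ X: ∑_{ξ ⊆ γ} (G₁ ⋆ G₂)(ξ) = ( ∑_{ξ ⊆ γ} G₁(ξ) ) · ( ∑_{ξ ⊆ γ} G₂(ξ) ); that is, K(G₁ ⋆ G₂) = (KG₁)·(KG₂) on finite configurations. -/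
/-! An ordered partition `(η₁, η₂, η₃)` of `ξ` carries the same data as a pair `(A, B)` with
`A ∪ B = ξ`, via `A = η₁ ∪ η₂` and `B = η₂ ∪ η₃`; conversely `η₁ = A \ B`, `η₂ = A ∩ B` and
`η₃ = B \ A`. Hence `(G₁ ⋆ G₂)(ξ)` is the sum of `G₁ A * G₂ B` over the pairs with union `ξ`, and
letting `ξ` range over the subsets of `γ` yields each pair of subsets of `γ` exactly once. -/

open Finset

section UnionAntidiagonal

variable {X M : Type*} [DecidableEq X] [AddCommMonoid M]

/-- The ordered pairs of finite sets with union `ξ`: the analogue for `∪` of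
`Finset.antidiagonal`, indexing the terms of the ⋆-convolution at `ξ`. -/
def unionAntidiagonal (ξ : Finset X) : Finset (Finset X × Finset X) :=
  {p ∈ ξ.powerset ×ˢ ξ.powerset | p.1 ∪ p.2 = ξ}

theorem mem_unionAntidiagonal {ξ : Finset X} {p : Finset X × Finset X} :
    p ∈ unionAntidiagonal ξ ↔ p.1 ∪ p.2 = ξ := by
  simp only [unionAntidiagonal, mem_filter, mem_product, mem_powerset, and_iff_right_iff_imp]
  rintro rfl
  exact ⟨subset_union_left, subset_union_right⟩

theorem sum_powerset_sum_unionAntidiagonal (γ : Finset X) (f : Finset X × Finset X → M) :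
    ∑ ξ ∈ γ.powerset, ∑ p ∈ unionAntidiagonal ξ, f p =
      ∑ p ∈ γ.powerset ×ˢ γ.powerset, f p := by
  have union_mem : ∀ p ∈ γ.powerset ×ˢ γ.powerset, p.1 ∪ p.2 ∈ γ.powerset := by
    simp only [mem_product, mem_powerset, union_subset_iff, imp_self, implies_true]
  rw [← sum_fiberwise_of_maps_to union_mem]
  refine sum_congr rfl fun ξ hξ ↦ sum_congr ?_ fun _ _ ↦ rfl
  ext p
  simp only [mem_unionAntidiagonal, mem_filter, mem_product, mem_powerset,
    iff_and_self, ← union_subset_iff]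
  rintro rfl
  exact mem_powerset.mp hξ

theorem sum_tripartition_eq_sum_unionAntidiagonal (ξ : Finset X)
    (f : Finset X × Finset X → M) :
    ∑ η₁ ∈ ξ.powerset, ∑ η₂ ∈ (ξ \ η₁).powerset, f (η₁ ∪ η₂, η₂ ∪ ((ξ \ η₁) \ η₂)) =
      ∑ p ∈ unionAntidiagonal ξ, f p := by
  rw [sum_sigma']
  refine sum_bij' (fun η _ ↦ (η.1 ∪ η.2, η.2 ∪ ((ξ \ η.1) \ η.2)))
    (fun p _ ↦ ⟨p.1 \ p.2, p.1 ∩ p.2⟩) ?_ ?_ ?_ ?_ fun _ _ ↦ rfl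
  · rintro ⟨η₁, η₂⟩ hη
    simp only [mem_sigma, mem_powerset, mem_unionAntidiagonal] at hη ⊢
    grind
  · rintro ⟨A, B⟩ hAB
    simp only [mem_sigma, mem_powerset, mem_unionAntidiagonal] at hAB ⊢
    grind
  · rintro ⟨η₁, η₂⟩ hη
    simp only [mem_sigma, mem_powerset] at hη
    have sdiff_eq : (η₁ ∪ η₂) \ (η₂ ∪ ((ξ \ η₁) \ η₂)) = η₁ := by grind
    have inter_eq : (η₁ ∪ η₂) ∩ (η₂ ∪ ((ξ \ η₁) \ η₂)) = η₂ := by grind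
    simp only [sdiff_eq, inter_eq]
  · rintro ⟨A, B⟩ hAB
    obtain rfl : A ∪ B = ξ := mem_unionAntidiagonal.mp hAB
    have left_eq : A \ B ∪ A ∩ B = A := sdiff_union_inter A B
    have right_eq : A ∩ B ∪ (((A ∪ B) \ (A \ B)) \ (A ∩ B)) = B := by grind
    simp only [left_eq, right_eq]

end UnionAntidiagonal

theorem K_transform_star_convolution_general {X R : Type*} [DecidableEq X]
    [NonUnitalNonAssocSemiring R] (G₁ G₂ : Finset X → R) (γ : Finset X) :
    ∑ ξ ∈ γ.powerset, ∑ η₁ ∈ ξ.powerset, ∑ η₂ ∈ (ξ \ η₁).powerset,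
        G₁ (η₁ ∪ η₂) * G₂ (η₂ ∪ ((ξ \ η₁) \ η₂))
      = (∑ ξ ∈ γ.powerset, G₁ ξ) * (∑ ξ ∈ γ.powerset, G₂ ξ) :=
  calc
    _ = ∑ ξ ∈ γ.powerset, ∑ p ∈ unionAntidiagonal ξ, G₁ p.1 * G₂ p.2 :=
      sum_congr rfl fun ξ _ ↦
        sum_tripartition_eq_sum_unionAntidiagonal ξ fun p ↦ G₁ p.1 * G₂ p.2
    _ = ∑ p ∈ γ.powerset ×ˢ γ.powerset, G₁ p.1 * G₂ p.2 :=
      sum_powerset_sum_unionAntidiagonal γ _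
    _ = (∑ ξ ∈ γ.powerset, G₁ ξ) * (∑ ξ ∈ γ.powerset, G₂ ξ) := by
      rw [sum_mul_sum, sum_product]

/-- The K-transform turns the ⋆-convolution into a pointwise product:
`K(G₁ ⋆ G₂) = (KG₁) · (KG₂)` on finite configurations, where
`(G₁ ⋆ G₂)(ξ) = ∑_{(η₁,η₂,η₃)} G₁(η₁ ∪ η₂) G₂(η₂ ∪ η₃)`, the sum over all
ordered partitions of `ξ` into three (pairwise disjoint) parts.  Here the
ordered partitions of `ξ` are parametrized by `η₁ ⊆ ξ`, `η₂ ⊆ ξ \ η₁`, with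
`η₃ = (ξ \ η₁) \ η₂`. -/
theorem K_transform_star_convolution {X : Type*} [DecidableEq X]
    (G₁ G₂ : Finset X → ℝ) (γ : Finset X) :
    ∑ ξ ∈ γ.powerset, ∑ η₁ ∈ ξ.powerset, ∑ η₂ ∈ (ξ \ η₁).powerset,
        G₁ (η₁ ∪ η₂) * G₂ (η₂ ∪ ((ξ \ η₁) \ η₂))
      = (∑ ξ ∈ γ.powerset, G₁ ξ) * (∑ ξ ∈ γ.powerset, G₂ ξ) :=
  K_transform_star_convolution_general G₁ G₂ γ
end

section
/- Let d ≥ 1, let S ⊂ ℤ^d be finite, and let Λ := ⋃_{r ∈ S} Q_r be the corresponding finite union of unit cubes. Let ζ ≥ 1, τ ≥ 0, σ ≥ 0, and 0 < p < 1. Define, for finite γ ⊂ ℝ^d, U(γ) := ζ^{|γ ∩ Λ|} · exp[ τ (1 + σ ∑_{r ∈ S} |γ_r|²)^p ]. Then for every finite subset η ⊂ ℝ^d: | ∑_{ξ ⊆ η} (−1)^{|η ∖ ξ|} U(ξ) | ≤ 𝟙[η ⊆ Λ] · (2ζ)^{|η|} · exp[ τ (1 + σ ∑_{r ∈ ℤ^d}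 |η_r|²)^p ]. -/
/-!
If `η` has a point `x` outside `Λ`, then `U` does not see `x`, and pairing `ξ` with `insert x ξ`
cancels the alternating sum. If `η ⊆ Λ`, the exponential factor of `U` increases with the
configuration, so it can be replaced by its value at `η`, and the binomial theorem
bounds what remains by `(1 + ζ)^|η| ≤ (2ζ)^|η|`.
-/

section InverseKTransform

variable {α R : Type*} [DecidableEq α]

/-- The inverse `K`-transform of a function on finite configurations, which inverts
`(K G) η = ∑ ξ ∈ η.powerset, G ξ`. -/
def inverseKTransform [Ring R] (U : Finset α → R) (η : Finset α) : R :=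
  ∑ ξ ∈ η.powerset, (-1) ^ (η \ ξ).card * U ξ

theorem inverseKTransform_eq_zero_of_insert_eq [Ring R] {U : Finset α → R} {x : α}
    (hU : ∀ ξ, U (insert x ξ) = U ξ) {η : Finset α} (hx : x ∈ η) :
    inverseKTransform U η = 0 := by
  obtain ⟨θ, hxθ, rfl⟩ : ∃ θ, x ∉ θ ∧ insert x θ = η :=
    ⟨η.erase x, Finset.notMem_erase x η, Finset.insert_erase hx⟩
  rw [inverseKTransform, Finset.sum_powerset_insert hxθ, ← Finset.sum_add_distrib]
  refine Finset.sum_eq_zero fun ξ hξ ↦ ?_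
  have hxξ : x ∉ ξ := fun h ↦ hxθ (Finset.mem_powerset.1 hξ h)
  have card_sdiff_succ : (insert x θ \ ξ).card = (θ \ ξ).card + 1 := by
    rw [Finset.insert_sdiff_of_notMem _ hxξ,
      Finset.card_insert_of_notMem fun h ↦ hxθ (Finset.mem_sdiff.1 h).1]
  have sdiff_insert : insert x θ \ insert x ξ = θ \ ξ := by
    rw [Finset.insert_sdiff_insert, Finset.sdiff_insert_of_notMem hxθ]
  rw [hU, card_sdiff_succ, sdiff_insert, pow_succ, mul_neg_one, neg_mul, neg_add_cancel]

theorem abs_inverseKTransform_le_sum_abs [Ring R] [LinearOrder R] [IsOrderedRing R]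
    (U : Finset α → R) (η : Finset α) :
    |inverseKTransform U η| ≤ ∑ ξ ∈ η.powerset, |U ξ| := by
  refine (Finset.abs_sum_le_sum_abs _ _).trans_eq (Finset.sum_congr rfl fun ξ _ ↦ ?_)
  rw [abs_mul, abs_neg_one_pow, one_mul]

variable [CommRing R] [LinearOrder R] [IsOrderedRing R]

theorem abs_inverseKTransform_le_one_add_pow_mul {U : Finset α → R} {η : Finset α} {z C : R}
    (hU : ∀ ξ ⊆ η, |U ξ| ≤ z ^ ξ.card * C) :
    |inverseKTransform U η| ≤ (1 + z) ^ η.card * C := by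
  calc |inverseKTransform U η|
      ≤ ∑ ξ ∈ η.powerset, |U ξ| := abs_inverseKTransform_le_sum_abs U η
    _ ≤ ∑ ξ ∈ η.powerset, z ^ ξ.card * C :=
        Finset.sum_le_sum fun ξ hξ ↦ hU ξ (Finset.mem_powerset.1 hξ)
    _ = (1 + z) ^ η.card * C := by
        rw [← Finset.sum_mul, add_comm, ← Finset.sum_pow_mul_eq_add_pow]
        simp only [one_pow, mul_one]

theorem abs_inverseKTransform_pow_card_filter_mul_le {Λ : Set α} [DecidablePred (· ∈ Λ)]
    {Φ : Finset α → R} (hΦ_nonneg : 0 ≤ Φ) (hΦ_mono : Monotone Φ)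
    (hΦ_insert : ∀ x ∉ Λ, ∀ γ, Φ (insert x γ) = Φ γ) (ζ : R) (η : Finset α)
    [Decidable ((η : Set α) ⊆ Λ)] :
    |inverseKTransform (fun γ ↦ ζ ^ (γ.filter (· ∈ Λ)).card * Φ γ) η| ≤
      (if (η : Set α) ⊆ Λ then 1 else 0) * (1 + |ζ|) ^ η.card * Φ η := by
  split_ifs with hη
  · rw [one_mul]
    refine abs_inverseKTransform_le_one_add_pow_mul fun ξ hξ ↦ ?_
    have filter_eq : ξ.filter (· ∈ Λ) = ξ := Finset.filter_true_of_mem fun x hx ↦ hη (hξ hx)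
    rw [filter_eq, abs_mul, abs_pow, abs_of_nonneg (hΦ_nonneg ξ)]
    gcongr
    exact hΦ_mono hξ
  · obtain ⟨x, hxη, hxΛ⟩ := Set.not_subset.1 hη
    rw [inverseKTransform_eq_zero_of_insert_eq (x := x) _ (Finset.mem_coe.1 hxη)]
    · simp only [abs_zero, zero_mul, le_refl]
    · intro ξ
      rw [Finset.filter_insert, if_neg hxΛ, hΦ_insert x hxΛ]

end InverseKTransform

section OccupationNumbers

variable {α ι : Type*} {Q : ι → Set α} [∀ r, DecidablePred (· ∈ Q r)]

theorem monotone_sum_sq_card_filter_mem (S : Finset ι) :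
    Monotone fun γ : Finset α ↦ ∑ r ∈ S, ((γ.filter (· ∈ Q r)).card : ℝ) ^ 2 := by
  intro γ γ' h
  dsimp only
  gcongr

theorem sum_sq_card_filter_mem_insert [DecidableEq α] {S : Finset ι} {x : α}
    (hx : x ∉ ⋃ r ∈ S, Q r) (γ : Finset α) :
    ∑ r ∈ S, (((insert x γ).filter (· ∈ Q r)).card : ℝ) ^ 2 =
      ∑ r ∈ S, ((γ.filter (· ∈ Q r)).card : ℝ) ^ 2 := by
  refine Finset.sum_congr rfl fun r hr ↦ ?_
  rw [Finset.filter_insert, if_neg fun hxr ↦ hx (Set.mem_biUnion hr hxr)]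

theorem summable_sq_card_filter_mem (hQ : ∀ x, {r | x ∈ Q r}.Finite) (γ : Finset α) :
    Summable fun r ↦ ((γ.filter (· ∈ Q r)).card : ℝ) ^ 2 := by
  refine summable_of_hasFiniteSupport ((γ.finite_toSet.biUnion fun x _ ↦ hQ x).subset fun r hr ↦ ?_)
  obtain ⟨x, hx⟩ : (γ.filter (· ∈ Q r)).Nonempty := by
    rw [← Finset.card_ne_zero]
    exact fun h ↦ hr (by simp [h])
  exact Set.mem_biUnion (Finset.mem_filter.1 hx).1 (Finset.mem_filter.1 hx).2

end OccupationNumbers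

theorem monotoneOn_exp_mul_one_add_mul_rpow {τ σ p : ℝ} (hτ : 0 ≤ τ) (hσ : 0 ≤ σ) (hp : 0 ≤ p) :
    MonotoneOn (fun s : ℝ ↦ Real.exp (τ * (1 + σ * s) ^ p)) (Set.Ici 0) := by
  intro s (hs : 0 ≤ s) t _ hst
  dsimp only
  gcongr

theorem setOf_mem_unitCube_eq_singleton_round {ι K : Type*} [Field K] [LinearOrder K]
    [IsStrictOrderedRing K] [FloorRing K] (x : ι → K) :
    {r : ι → ℤ | ∀ i, (r i : K) - 1 / 2 ≤ x i ∧ x i < (r i : K) + 1 / 2} =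
      {fun i ↦ round (x i)} := by
  ext r
  rw [Set.mem_singleton_iff, funext_iff]
  refine forall_congr' fun i ↦ ?_
  rw [eq_comm, round_eq, Int.floor_eq_iff, sub_le_iff_le_add, ← lt_sub_iff_add_lt]
  ring_nf

open Classical in
theorem inverse_K_transform_estimate_general {α ι : Type*} [DecidableEq α] (S : Finset ι)
    (Q : ι → Set α) (hQ : ∀ x, {r | x ∈ Q r}.Finite) (Λ : Set α) (hΛ : Λ = ⋃ r ∈ S, Q r)
    (ζ τ σ p : ℝ) (hτ : 0 ≤ τ) (hσ : 0 ≤ σ) (hp : 0 ≤ p) (U : Finset α → ℝ)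
    (hU : ∀ γ : Finset α,
      U γ = ζ ^ (γ.filter (· ∈ Λ)).card *
        Real.exp (τ * (1 + σ * ∑ r ∈ S, ((γ.filter (· ∈ Q r)).card : ℝ) ^ 2) ^ p))
    (η : Finset α) :
    |inverseKTransform U η| ≤
      (if (η : Set α) ⊆ Λ then (1 : ℝ) else 0) * (1 + |ζ|) ^ η.card *
        Real.exp (τ * (1 + σ * ∑' r, ((η.filter (· ∈ Q r)).card : ℝ) ^ 2) ^ p) := by
  obtain rfl : U = _ := funext hU
  have exp_mono := monotoneOn_exp_mul_one_add_mul_rpow hτ hσ hp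
  have sum_nonneg (γ : Finset α) : 0 ≤ ∑ r ∈ S, ((γ.filter (· ∈ Q r)).card : ℝ) ^ 2 := by
    positivity
  have sum_le_tsum : ∑ r ∈ S, ((η.filter (· ∈ Q r)).card : ℝ) ^ 2 ≤
      ∑' r, ((η.filter (· ∈ Q r)).card : ℝ) ^ 2 :=
    (summable_sq_card_filter_mem hQ η).sum_le_tsum S fun r _ ↦ sq_nonneg _
  refine (abs_inverseKTransform_pow_card_filter_mul_le (fun γ ↦ (Real.exp_pos _).le)
    (fun γ γ' h ↦ exp_mono (sum_nonneg γ) (sum_nonneg γ') (monotone_sum_sq_card_filter_mem S h))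
    (fun x hx γ ↦ ?_) ζ η).trans ?_
  · rw [sum_sq_card_filter_mem_insert (hΛ ▸ hx)]
  · exact mul_le_mul_of_nonneg_left
      (exp_mono (sum_nonneg η) ((sum_nonneg η).trans sum_le_tsum) sum_le_tsum) (by positivity)

open Classical in
/-- Lemma 5.1 of the paper: for `Λ` a finite union of unit cubes `Q_r`, `r ∈ S`,
and `U(γ) := ζ^{|γ ∩ Λ|} exp[τ (1 + σ ∑_{r ∈ S} |γ_r|²)^p]` (with `ζ ≥ 1`,
`τ, σ ≥ 0`, `0 < p < 1`), the inverse K-transform satisfies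
`|(K⁻¹U)(η)| ≤ 𝟙[η ⊆ Λ] (2ζ)^{|η|} exp[τ (1 + σ ∑_{r ∈ ℤ^d} |η_r|²)^p]`. -/
theorem inverse_K_transform_estimate (d : ℕ) (hd : 1 ≤ d)
    (S : Finset (Fin d → ℤ))
    (Q : (Fin d → ℤ) → Set (EuclideanSpace ℝ (Fin d)))
    (hQ : ∀ r, Q r = {x | ∀ i, (r i : ℝ) - 1 / 2 ≤ x i ∧ x i < (r i : ℝ) + 1 / 2})
    (Λ : Set (EuclideanSpace ℝ (Fin d))) (hΛ : Λ = ⋃ r ∈ S, Q r)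
    (ζ τ σ p : ℝ) (hζ : 1 ≤ ζ) (hτ : 0 ≤ τ) (hσ : 0 ≤ σ)
    (hp0 : 0 < p) (hp1 : p < 1)
    (U : Finset (EuclideanSpace ℝ (Fin d)) → ℝ)
    (hU : ∀ γ : Finset (EuclideanSpace ℝ (Fin d)),
      U γ = ζ ^ (γ.filter (· ∈ Λ)).card *
        Real.exp (τ * (1 + σ * ∑ r ∈ S, ((γ.filter (· ∈ Q r)).card : ℝ) ^ 2) ^ p)) :
    ∀ η : Finset (EuclideanSpace ℝ (Fin d)),
      |∑ ξ ∈ η.powerset, (-1 : ℝ) ^ (η \ ξ).card * U ξ| ≤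
        (if (↑η : Set (EuclideanSpace ℝ (Fin d))) ⊆ Λ then (1 : ℝ) else 0) *
          (2 * ζ) ^ η.card *
          Real.exp (τ * (1 + σ *
            ∑' r : Fin d → ℤ, ((η.filter (· ∈ Q r)).card : ℝ) ^ 2) ^ p) := by
  intro η
  have hQ_finite (x) : {r | x ∈ Q r}.Finite := by
    simp only [hQ, Set.mem_ofPred_eq, setOf_mem_unitCube_eq_singleton_round, Set.finite_singleton]
  have one_add_abs_le : 1 + |ζ| ≤ 2 * ζ := by
    rw [abs_of_nonneg (zero_le_one.trans hζ)]
    linarith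
  refine (inverse_K_transform_estimate_general S Q hQ_finite Λ hΛ ζ τ σ p hτ hσ hp0.le U hU η).trans
    ?_
  gcongr
end

section
/- Let d ≥ 1, let φ : ℝ^d → ℝ be measurable and bounded below (φ(x) ≥ m for all x, for some m ∈ ℝ), let Θ ⊂ ℝ^d be a bounded measurable set, and assume sup_{x ∈ Θᶜ} φ(x) ≤ M for some M ∈ ℝ. Then the function x ↦ e^{−φ(x)} − 1 is Lebesgue integrable on ℝ^d if and only if φ is Lebesgue integrable on the complement Θᶜ. -/
open MeasureTheory

/-!
On any bounded interval `|exp t - 1|` and `|t|` are comparable, so where `φ` is bounded on both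
sides `exp (-φ) - 1` and `φ` are integrable together. On a set of finite measure `exp (-φ) - 1` is
integrable as soon as `φ` is bounded below, because it is then bounded.
-/

theorem abs_exp_sub_one_le_max_mul_abs (t : ℝ) :
    |Real.exp t - 1| ≤ max 1 (Real.exp t) * |t| := by
  rcases le_total 0 t with ht | ht
  · have hexp : 1 ≤ Real.exp t := Real.one_le_exp ht
    rw [abs_of_nonneg ht, abs_of_nonneg (sub_nonneg.2 hexp), max_eq_right hexp]
    calc Real.exp t - 1 = Real.exp t * (1 - Real.exp (-t)) := by
          rw [mul_sub, ← Real.exp_add, add_neg_cancel, Real.exp_zero, mul_one]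
      _ ≤ Real.exp t * t := by
          gcongr
          linarith [Real.one_sub_le_exp_neg t]
  · have hexp : Real.exp t ≤ 1 := Real.exp_le_one_iff.2 ht
    rw [abs_of_nonpos ht, abs_of_nonpos (sub_nonpos.2 hexp), max_eq_left hexp]
    linarith [Real.add_one_le_exp t]

theorem abs_le_max_mul_abs_exp_sub_one (t : ℝ) :
    |t| ≤ max 1 (Real.exp (-t)) * |Real.exp t - 1| := by
  rcases le_total 0 t with ht | ht
  · have hexp : 1 ≤ Real.exp t := Real.one_le_exp ht
    have hexp_neg : Real.exp (-t) ≤ 1 := Real.exp_le_one_iff.2 (neg_nonpos.2 ht)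
    rw [abs_of_nonneg ht, abs_of_nonneg (sub_nonneg.2 hexp), max_eq_left hexp_neg]
    linarith [Real.add_one_le_exp t]
  · have hexp : Real.exp t ≤ 1 := Real.exp_le_one_iff.2 ht
    have hexp_neg : 1 ≤ Real.exp (-t) := Real.one_le_exp (neg_nonneg.2 ht)
    rw [abs_of_nonpos ht, abs_of_nonpos (sub_nonpos.2 hexp), max_eq_right hexp_neg]
    calc -t ≤ Real.exp (-t) - 1 := by linarith [Real.add_one_le_exp (-t)]
      _ = Real.exp (-t) * -(Real.exp t - 1) := by
          rw [neg_sub, mul_sub, ← Real.exp_add, neg_add_cancel, Real.exp_zero, mul_one]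

section Integrability

variable {α : Type*} [MeasurableSpace α] {μ : Measure α} {f : α → ℝ} {a b : ℝ}

theorem integrable_exp_sub_one_of_le (hf : Integrable f μ) (hb : ∀ᵐ x ∂μ, f x ≤ b) :
    Integrable (fun x => Real.exp (f x) - 1) μ := by
  refine (hf.abs.const_mul (max 1 (Real.exp b))).mono'
    (hf.aemeasurable.exp.sub_const 1).aestronglyMeasurable ?_
  filter_upwards [hb] with x hx
  calc ‖Real.exp (f x) - 1‖ ≤ max 1 (Real.exp (f x)) * |f x| :=
        abs_exp_sub_one_le_max_mul_abs (f x)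
    _ ≤ max 1 (Real.exp b) * |f x| := by gcongr

theorem integrable_of_integrable_exp_sub_one_of_ge
    (hf : Integrable (fun x => Real.exp (f x) - 1) μ) (ha : ∀ᵐ x ∂μ, a ≤ f x) :
    Integrable f μ := by
  have hexp : AEMeasurable (fun x => Real.exp (f x)) μ := by
    simpa only [sub_add_cancel] using hf.aemeasurable.add_const 1
  refine (hf.abs.const_mul (max 1 (Real.exp (-a)))).mono'
    (Real.aemeasurable_of_aemeasurable_exp hexp).aestronglyMeasurable ?_
  filter_upwards [ha] with x hx
  calc ‖f x‖ ≤ max 1 (Real.exp (-f x)) * |Real.exp (f x) - 1| :=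
        abs_le_max_mul_abs_exp_sub_one (f x)
    _ ≤ max 1 (Real.exp (-a)) * |Real.exp (f x) - 1| := by gcongr

theorem integrable_exp_sub_one_iff (ha : ∀ᵐ x ∂μ, a ≤ f x) (hb : ∀ᵐ x ∂μ, f x ≤ b) :
    Integrable (fun x => Real.exp (f x) - 1) μ ↔ Integrable f μ :=
  ⟨fun hf => integrable_of_integrable_exp_sub_one_of_ge hf ha,
    fun hf => integrable_exp_sub_one_of_le hf hb⟩

theorem integrable_exp_sub_one_of_isFiniteMeasure [IsFiniteMeasure μ] (hf : AEMeasurable f μ)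
    (hb : ∀ᵐ x ∂μ, f x ≤ b) : Integrable (fun x => Real.exp (f x) - 1) μ := by
  have hexp : Integrable (fun x => Real.exp (f x)) μ := by
    simpa only [one_mul] using
      ProbabilityTheory.integrable_exp_mul_of_le 1 b zero_le_one hf hb
  exact hexp.sub (integrable_const 1)

theorem integrable_iff_integrableOn_compl {E : Type*} [NormedAddCommGroup E] {g : α → E}
    {s : Set α} (hg : IntegrableOn g s μ) : Integrable g μ ↔ IntegrableOn g sᶜ μ := by
  rw [← integrableOn_univ, ← Set.union_compl_self s, integrableOn_union, and_iff_right hg]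

theorem integrability_condition_iff_general {φ : α → ℝ} {Θ : Set α} {m M : ℝ}
    (hφ : AEMeasurable φ (μ.restrict Θ)) (hΘ : μ Θ ≠ ⊤)
    (hm : ∀ᵐ x ∂μ, m ≤ φ x) (hM : ∀ᵐ x ∂μ.restrict Θᶜ, φ x ≤ M) :
    Integrable (fun x => Real.exp (-φ x) - 1) μ ↔ IntegrableOn φ Θᶜ μ := by
  have : IsFiniteMeasure (μ.restrict Θ) := isFiniteMeasure_restrict.2 hΘ
  have hupper : ∀ᵐ x ∂μ, -φ x ≤ -m := hm.mono fun _ => neg_le_neg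
  have hlower : ∀ᵐ x ∂μ.restrict Θᶜ, -M ≤ -φ x := hM.mono fun _ => neg_le_neg
  have hint : IntegrableOn (fun x => Real.exp (-φ x) - 1) Θ μ :=
    integrable_exp_sub_one_of_isFiniteMeasure hφ.neg (ae_restrict_of_ae hupper)
  calc Integrable (fun x => Real.exp (-φ x) - 1) μ
      ↔ IntegrableOn (fun x => Real.exp (-φ x) - 1) Θᶜ μ := integrable_iff_integrableOn_compl hint
    _ ↔ IntegrableOn (fun x => -φ x) Θᶜ μ :=
        integrable_exp_sub_one_iff hlower (ae_restrict_of_ae hupper)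
    _ ↔ IntegrableOn φ Θᶜ μ := integrable_neg_iff

end Integrability

/-- For a measurable pair potential `φ` bounded below on `ℝ^d` and bounded
above outside a bounded set `Θ`, the integrability condition (I),
`∫ |e^{-φ(x)} - 1| dx < ∞`, is equivalent to `φ ∈ L¹(Θᶜ, dx)`. -/
theorem integrability_condition_iff (d : ℕ) (hd : 1 ≤ d)
    (φ : EuclideanSpace ℝ (Fin d) → ℝ) (hmeas : Measurable φ)
    (m : ℝ) (hm : ∀ x, m ≤ φ x)
    (Θ : Set (EuclideanSpace ℝ (Fin d)))
    (hΘbdd : Bornology.IsBounded Θ) (hΘmeas : MeasurableSet Θ)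
    (M : ℝ) (hM : ∀ x ∈ Θᶜ, φ x ≤ M) :
    Integrable (fun x => Real.exp (-φ x) - 1) ↔ IntegrableOn φ Θᶜ :=
  integrability_condition_iff_general hmeas.aemeasurable hΘbdd.measure_lt_top.ne
    (.of_forall hm) (ae_restrict_of_forall_mem hΘmeas.compl hM)
end
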